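/- arXiv:1911.01210 — 2 statements merged into one kernel-verified Lean document; each statement's English description precedes it below -/
import Mathlib

section
/- Let T : V → V be a ℚ-linear map commuting with σ₅ and with σ₂. Then: (i) there exist a, b ∈ ℚ with T = a·id + b·X (Schur: the commutant of the A₅-action is the field ℚ(√5) = ℚ[X]); (ii) if moreover T(E) ⊆ E, then a, b ∈ ℤ (the commutant of the ℤA₅-module E is 𝒪 = ℤ[X]); (iii) if moreover T(E₀) ⊆ E₀, then a ∈ ℤ and b ∈ 2ℤ (the commutant of E₀ is 𝒪₀ = ℤ + ℤ·2X). -/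
/-!
The vectors `e, e₀, …, e₄` form, up to sign, a single orbit of the group generated by `σ₅` and `σ₂`:
`σ₂ e = e₀` and `σ₅ⁱ e₀ = eᵢ`. A map commuting with both is therefore determined by its value at
`e` (`eq_of_commute`). Since `σ₅ e = e`, the vector `T e` is fixed by `σ₅`, so it has the form
`p e + q (e₀ + ⋯ + e₄)`. The map `X` itself commutes with `σ₅` and `σ₂`, and
`X e = ½ (e + e₀ + ⋯ + e₄)`, so `(p - q) id + 2q X` takes the same value at `e` and equals `T`.

For the lattices, `T e` has coordinates `p, q`, which are integers if `T` preserves `E₀`; and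
`T (e + e₀)` has `e`-coordinate `p + q` and `e₁`-coordinate `2q`, which are integers if `T`
preserves `E`. Then `2q` and `p - q = (p + q) - 2q` are integers.
-/

/-- Index type for the basis `e, e₀, …, e₄` of `V`: `none ↦ e`, `some i ↦ eᵢ`. -/
abbrev J5 := Option (ZMod 5)

/-- The 6-dimensional `ℚ`-vector space `V` with basis indexed by `J5`. -/
abbrev V := J5 → ℚ

/-- The basis vector of `V` with index `j`. -/
def bvec : J5 → V := fun j => Pi.single j 1

/-- The basis vector `e`. -/
def eV : V := Pi.single none 1

/-- The basis vectors `eᵢ`, `i ∈ ℤ/5`. -/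
def ee (i : ZMod 5) : V := Pi.single (some i) 1

/-- The symmetric bilinear form on `V` for which the basis `e, e₀, …, e₄` is orthonormal. -/
def sform (x y : V) : ℚ := ∑ j : J5, x j * y j

/-- `ε = ½(e + e₀ + e₁ + e₂ + e₃ + e₄)`. -/
def eps : V := (1 / 2 : ℚ) • (eV + ∑ i : ZMod 5, ee i)

/-- The `ℚ`-linear map `X : V → V` determined by `X(e) = ε` and
`X(eᵢ) = ε − e_{i+2} − e_{i−2}` (indices mod 5); in coordinates,
`(X x)(j) = (Σ_t x_t)/2`, minus `x_{k−2} + x_{k+2}` when `j = some k`. -/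
def Xmap : V →ₗ[ℚ] V where
  toFun x := fun j =>
    (∑ t : J5, x t) / 2 +
      (match j with
        | none => 0
        | some k => -(x (some (k - 2))) - x (some (k + 2)))
  map_add' x y := by
    funext j
    rcases j with _ | k <;> simp [Finset.sum_add_distrib] <;> ring
  map_smul' c x := by
    funext j
    have hs : (∑ i : ZMod 5, c * x (some i)) = c * ∑ i : ZMod 5, x (some i) :=
      (Finset.mul_sum _ _ _).symm
    rcases j with _ | k <;> simp <;> rw [hs] <;> ring

/-- Index rotation `some i ↦ some (i+1)`, `none ↦ none`. -/
def rotIdx : J5 ≃ J5 := Equiv.optionCongr (Equiv.addRight (1 : ZMod 5))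

/-- `σ₅ : V ≃ V`, with `σ₅(e) = e` and `σ₅(eᵢ) = e_{i+1}`. -/
def s5 : V ≃ₗ[ℚ] V := LinearEquiv.funCongrLeft ℚ ℚ rotIdx.symm

/-- Index involution underlying `σ₂`. -/
def t2 : J5 → J5
  | none => some 0
  | some i => if i = 0 then none else if i = 1 then some 4 else if i = 4 then some 1 else some i

/-- Sign function underlying `σ₂`. -/
def sg2 : J5 → ℚ := fun j => if j = some 2 ∨ j = some 3 then -1 else 1

/-- The function underlying `σ₂`. -/
def s2fun : V → V := fun x j => sg2 j * x (t2 j)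

lemma t2_invol : ∀ j, t2 (t2 j) = j := by decide

lemma sg2_mul : ∀ j, sg2 j * sg2 (t2 j) = 1 := by
  intro j
  rcases j with _ | i
  · simp (config := { decide := true }) [sg2, t2]
  · fin_cases i <;> simp (config := { decide := true }) [sg2, t2]

lemma s2fun_invol : Function.Involutive s2fun := by
  intro x
  funext j
  show sg2 j * (sg2 (t2 j) * x (t2 (t2 j))) = x j
  rw [t2_invol, ← mul_assoc, sg2_mul, one_mul]

/-- `σ₂ : V ≃ V`, with `σ₂(e) = e₀`, `σ₂(e₀) = e`, `σ₂(e₁) = e₄`, `σ₂(e₄) = e₁`,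
`σ₂(e₂) = −e₂`, `σ₂(e₃) = −e₃`. -/
def s2 : V ≃ₗ[ℚ] V where
  toFun := s2fun
  invFun := s2fun
  left_inv := s2fun_invol
  right_inv := s2fun_invol
  map_add' x y := by funext j; simp [s2fun, mul_add]
  map_smul' c x := by funext j; simp [s2fun]; ring

/-- `E₀ ⊂ V`: the `ℤ`-span of the basis `{e, e₀, …, e₄}`. -/
def E0 : Submodule ℤ V := Submodule.span ℤ (Set.range bvec)

/-- `E ⊂ E₀`: the integral combinations of the basis with even coefficient sum. -/
def Eset : Set V := {x | x ∈ E0 ∧ ∃ m : ℤ, (∑ j : J5, x j) = 2 * m}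

lemma s5_none (v : V) : s5 v none = v none := rfl

lemma s5_some (v : V) (i : ZMod 5) : s5 v (some i) = v (some (i - 1)) := by
  rw [sub_eq_add_neg]
  rfl

lemma s2_apply (v : V) (j : J5) : s2 v j = sg2 j * v (t2 j) := rfl

lemma s5_bvec_some (i : ZMod 5) : s5 (bvec (some i)) = bvec (some (i + 1)) := by
  funext j
  rcases j with _ | k
  · simp [s5_none, bvec]
  · simp [s5_some, bvec, Pi.single_apply, sub_eq_iff_eq_add]

lemma s5_bvec_none : s5 (bvec none) = bvec none := by
  funext j
  rcases j with _ | k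
  · simp [s5_none]
  · simp [s5_some, bvec]

lemma s2_bvec_none : s2 (bvec none) = bvec (some 0) := by
  funext j
  rcases j with _ | k
  · simp [s2_apply, bvec, t2]
  · fin_cases k <;> simp (config := { decide := true }) [s2_apply, bvec, t2, sg2, Pi.single_apply]

/-- Schur-type rigidity: `e` generates `V` as a module over the group generated by `σ₅`, `σ₂`. -/
lemma eq_of_commute (S T : V →ₗ[ℚ] V)
    (hS5 : ∀ v, S (s5 v) = s5 (S v)) (hS2 : ∀ v, S (s2 v) = s2 (S v))
    (hT5 : ∀ v, T (s5 v) = s5 (T v)) (hT2 : ∀ v, T (s2 v) = s2 (T v))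
    (h : S (bvec none) = T (bvec none)) : S = T := by
  have h0 : S (bvec (some 0)) = T (bvec (some 0)) := by
    rw [← s2_bvec_none, hS2, hT2, h]
  have hn : ∀ n : ℕ, S (bvec (some (n : ZMod 5))) = T (bvec (some (n : ZMod 5))) := by
    intro n
    induction n with
    | zero => simpa using h0
    | succ n ih =>
      rw [Nat.cast_succ, ← s5_bvec_some, hS5, hT5, ih]
  refine LinearMap.pi_ext' fun j => LinearMap.ext_ring ?_
  rcases j with _ | i
  · exact h
  · have hi := hn i.val
    rw [ZMod.natCast_zmod_val] at hi
    exact hi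

lemma sum_J5 (v : V) : ∑ j : J5, v j =
    v none + (v (some 0) + v (some 1) + v (some 2) + v (some 3) + v (some 4)) := by
  rw [Fintype.sum_option]
  congr 1
  exact Fin.sum_univ_five (fun i : Fin 5 => v (some (i : ZMod 5)))

lemma Xmap_none (v : V) : Xmap v none = (∑ t : J5, v t) / 2 + 0 := rfl

lemma Xmap_some (v : V) (k : ZMod 5) : Xmap v (some k) =
    (∑ t : J5, v t) / 2 + (-(v (some (k - 2))) - v (some (k + 2))) := rfl

lemma Xmap_s5 (v : V) : Xmap (s5 v) = s5 (Xmap v) := by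
  have hs : ∑ t : J5, s5 v t = ∑ t : J5, v t :=
    Equiv.sum_comp rotIdx.symm v
  funext j
  rcases j with _ | k
  · rw [s5_none, Xmap_none, Xmap_none, hs]
  · rw [s5_some, Xmap_some, Xmap_some, hs, s5_some, s5_some, sub_right_comm,
      add_sub_right_comm]

lemma s2_coords (v : V) : s2 v none = v (some 0) ∧ s2 v (some 0) = v none ∧
    s2 v (some 1) = v (some 4) ∧ s2 v (some 2) = -v (some 2) ∧
    s2 v (some 3) = -v (some 3) ∧ s2 v (some 4) = v (some 1) := by
  refine ⟨?_, ?_, ?_, ?_, ?_, ?_⟩ <;>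
    simp (config := { decide := true }) [s2_apply, sg2, t2]

lemma Xmap_coords (v : V) :
    Xmap v (some 0) = (∑ t : J5, v t) / 2 - v (some 3) - v (some 2) ∧
    Xmap v (some 1) = (∑ t : J5, v t) / 2 - v (some 4) - v (some 3) ∧
    Xmap v (some 2) = (∑ t : J5, v t) / 2 - v (some 0) - v (some 4) ∧
    Xmap v (some 3) = (∑ t : J5, v t) / 2 - v (some 1) - v (some 0) ∧
    Xmap v (some 4) = (∑ t : J5, v t) / 2 - v (some 2) - v (some 1) := by
  have h (k a b : ZMod 5) (ha : k - 2 = a) (hb : k + 2 = b) :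
      Xmap v (some k) = (∑ t : J5, v t) / 2 - v (some a) - v (some b) := by
    rw [Xmap_some, ha, hb]; ring
  exact ⟨h _ _ _ (by decide) (by decide), h _ _ _ (by decide) (by decide),
    h _ _ _ (by decide) (by decide), h _ _ _ (by decide) (by decide),
    h _ _ _ (by decide) (by decide)⟩

lemma Xmap_s2 (v : V) : Xmap (s2 v) = s2 (Xmap v) := by
  obtain ⟨a, a0, a1, a2, a3, a4⟩ := s2_coords v
  obtain ⟨b, b0, b1, b2, b3, b4⟩ := s2_coords (Xmap v)
  obtain ⟨c0, c1, c2, c3, c4⟩ := Xmap_coords v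
  obtain ⟨d0, d1, d2, d3, d4⟩ := Xmap_coords (s2 v)
  have c := Xmap_none v
  have d := Xmap_none (s2 v)
  rw [sum_J5] at c c0 c1 c2 c3 c4 d d0 d1 d2 d3 d4
  funext j
  rcases j with _ | k
  · linarith
  · have hk : k = 0 ∨ k = 1 ∨ k = 2 ∨ k = 3 ∨ k = 4 := by revert k; decide
    rcases hk with rfl | rfl | rfl | rfl | rfl <;> linarith

lemma bvec_mem_E0 (j : J5) : bvec j ∈ E0 := Submodule.subset_span ⟨j, rfl⟩

lemma exists_int_of_mem_E0 {v : V} (hv : v ∈ E0) (j : J5) : ∃ m : ℤ, v j = m := by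
  induction hv using Submodule.span_induction with
  | mem x hx =>
    obtain ⟨i, rfl⟩ := hx
    by_cases h : j = i
    · exact ⟨1, by simp [bvec, h]⟩
    · exact ⟨0, by simp [bvec, h]⟩
  | zero => exact ⟨0, by simp⟩
  | add x y _ _ hx hy =>
    obtain ⟨m, hm⟩ := hx
    obtain ⟨n, hn⟩ := hy
    exact ⟨m + n, by simp [hm, hn]⟩
  | smul c x _ hx =>
    obtain ⟨m, hm⟩ := hx
    exact ⟨c * m, by simp [hm]⟩

/-- Explicit form of the commutant: with `p` and `q` the coordinates of `T e` along `e` and `e₀`,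
`T = (p - q) id + 2q X`. -/
lemma commutant_eq (T : V →ₗ[ℚ] V)
    (h5 : ∀ v : V, T (s5 v) = s5 (T v)) (h2 : ∀ v : V, T (s2 v) = s2 (T v)) :
    T = (T (bvec none) none - T (bvec none) (some 0)) • (LinearMap.id : V →ₗ[ℚ] V) +
      (2 * T (bvec none) (some 0)) • Xmap := by
  have hfix : s5 (T (bvec none)) = T (bvec none) := by rw [← h5, s5_bvec_none]
  have hstep (i : ZMod 5) : T (bvec none) (some (i + 1)) = T (bvec none) (some i) := by
    have := congrFun hfix (some (i + 1))
    rw [s5_some, add_sub_cancel_right] at this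
    exact this.symm
  have hconst (n : ℕ) : T (bvec none) (some (n : ZMod 5)) = T (bvec none) (some 0) := by
    induction n with
    | zero => simp
    | succ n ih => rw [Nat.cast_succ, hstep, ih]
  apply eq_of_commute _ _ h5 h2
  · intro v
    simp [Xmap_s5]
  · intro v
    simp [Xmap_s2]
  · funext j
    rcases j with _ | i
    · simp [Xmap_none, bvec]
      ring
    · have hi := hconst i.val
      rw [ZMod.natCast_zmod_val] at hi
      rw [hi]
      simp [Xmap_some, bvec]
      ring

/-- Schur's lemma for the icosahedral module `V` and the commutants of the lattices `E`
and `E₀`: a `ℚ`-linear map `T : V → V` commuting with `σ₅` and `σ₂` is of the form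
`a·id + b·X` with `a, b ∈ ℚ`; if moreover `T(E) ⊆ E` then `a, b ∈ ℤ` (the commutant of `E`
is `𝒪 = ℤ[X]`); and if moreover `T(E₀) ⊆ E₀` then `a ∈ ℤ` and `b ∈ 2ℤ` (the commutant of
`E₀` is `𝒪₀ = ℤ + ℤ·2X`). -/
theorem commutant_of_icosahedral_action (T : V →ₗ[ℚ] V)
    (h5 : ∀ v : V, T (s5 v) = s5 (T v))
    (h2 : ∀ v : V, T (s2 v) = s2 (T v)) :
    (∃ a b : ℚ, T = a • (LinearMap.id : V →ₗ[ℚ] V) + b • Xmap) ∧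
    ((∀ x ∈ Eset, T x ∈ Eset) →
      ∃ a b : ℤ, T = (a : ℚ) • (LinearMap.id : V →ₗ[ℚ] V) + (b : ℚ) • Xmap) ∧
    ((∀ x : V, x ∈ E0 → T x ∈ E0) →
      ∃ a b : ℤ, T = (a : ℚ) • (LinearMap.id : V →ₗ[ℚ] V) + (2 * b : ℚ) • Xmap) := by
  have hT := commutant_eq T h5 h2
  refine ⟨⟨_, _, hT⟩, fun hE => ?_, fun hE0 => ?_⟩
  · have hmem : bvec none + bvec (some 0) ∈ Eset := by
      refine ⟨add_mem (bvec_mem_E0 _) (bvec_mem_E0 _), 1, ?_⟩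
      simp [Finset.sum_add_distrib, bvec]
      norm_num
    have hTmem := (hE _ hmem).1
    obtain ⟨m, hm⟩ := exists_int_of_mem_E0 hTmem none
    obtain ⟨n, hn⟩ := exists_int_of_mem_E0 hTmem (some 1)
    generalize T (bvec none) none = p at hT
    generalize T (bvec none) (some 0) = q at hT
    have h1 : p + q = m := by
      rw [← hm, hT]
      simp [Xmap_none, bvec]
      ring
    have h3 : 2 * q = n := by
      rw [← hn, hT]
      simp (config := { decide := true }) [(Xmap_coords _).2.1, bvec, Pi.single_apply]
      ring
    refine ⟨m - n, n, ?_⟩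
    rw [hT]
    push_cast
    rw [← h1, ← h3]
    congr 2
    ring
  · have hTmem := hE0 _ (bvec_mem_E0 none)
    obtain ⟨m, hm⟩ := exists_int_of_mem_E0 hTmem none
    obtain ⟨n, hn⟩ := exists_int_of_mem_E0 hTmem (some 0)
    rw [hm, hn] at hT
    exact ⟨m - n, n, by rw [hT]; push_cast; rfl⟩
end

section
/- For all x, y ∈ V: Σ_{i∈ℤ/5} s(x, e+eᵢ+e_{i+1})·s(y, e+eᵢ+e_{i+1}) + Σ_{i∈ℤ/5} s(x, eᵢ−e_{i−2}−e_{i+2})·s(y, eᵢ−e_{i−2}−e_{i+2}) = 3·s(x,y) + 4·s(Xx, y). (That is, the variation tensor Σ_{δ∈Δ_c/±} δ⊗δ of the monodromy around a singular member of the Wiman–Edge pencil consisting of five conics equals (3+4X) applied to the inverse form of s.) -/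
theorem sform_add_right (x y z : V) : sform x (y + z) = sform x y + sform x z := by
  simp only [sform, Pi.add_apply, mul_add, Finset.sum_add_distrib]

theorem sform_sub_right (x y z : V) : sform x (y - z) = sform x y - sform x z := by
  simp only [sform, Pi.sub_apply, mul_sub, Finset.sum_sub_distrib]

theorem sform_eV (x : V) : sform x eV = x none := by
  simp [sform, eV, Pi.single_apply]

theorem sform_ee (x : V) (i : ZMod 5) : sform x (ee i) = x (some i) := by
  simp [sform, ee, Pi.single_apply]

theorem sum_zmod_five (f : ZMod 5 → ℚ) : ∑ i, f i = f 0 + f 1 + f 2 + f 3 + f 4 :=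
  Fin.sum_univ_five f

/-- The variation tensor of the singular member of the Wiman–Edge pencil consisting of
five conics: `Σ_{δ ∈ Δ_c/±} s(x,δ)·s(y,δ) = 3·s(x,y) + 4·s(Xx,y)`, i.e. the tensor
`Σ_{δ∈Δ_c/±} δ⊗δ` equals `(3+4X)` applied to the inverse form of `s`. -/
theorem variation_tensor_five_conics (x y : V) :
    (∑ i : ZMod 5,
        sform x (eV + ee i + ee (i + 1)) * sform y (eV + ee i + ee (i + 1))) +
      (∑ i : ZMod 5,
        sform x (ee i - ee (i - 2) - ee (i + 2)) * sform y (ee i - ee (i - 2) - ee (i + 2)))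
      = 3 * sform x y + 4 * sform (Xmap x) y := by
  have hX : sform (Xmap x) y = ∑ j : J5, Xmap x j * y j := rfl
  have hX0 : Xmap x none = (∑ t : J5, x t) / 2 + 0 := rfl
  have hXs (k : ZMod 5) : Xmap x (some k) =
      (∑ t : J5, x t) / 2 + (-(x (some (k - 2))) - x (some (k + 2))) := rfl
  have hs : sform x y = ∑ j : J5, x j * y j := rfl
  simp only [sform_add_right, sform_sub_right, sform_eV, sform_ee, hX, hs,
    Fintype.sum_option, hX0, hXs, sum_zmod_five]
  -- Reduction of the shifted indices modulo 5.
  simp only [show (0 + 1 : ZMod 5) = 1 from rfl, show (1 + 1 : ZMod 5) = 2 from rfl,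
    show (2 + 1 : ZMod 5) = 3 from rfl, show (3 + 1 : ZMod 5) = 4 from rfl,
    show (4 + 1 : ZMod 5) = 0 from rfl, show (0 - 2 : ZMod 5) = 3 from rfl,
    show (1 - 2 : ZMod 5) = 4 from rfl, show (2 - 2 : ZMod 5) = 0 from rfl,
    show (3 - 2 : ZMod 5) = 1 from rfl, show (4 - 2 : ZMod 5) = 2 from rfl,
    show (0 + 2 : ZMod 5) = 2 from rfl, show (1 + 2 : ZMod 5) = 3 from rfl,
    show (2 + 2 : ZMod 5) = 4 from rfl, show (3 + 2 : ZMod 5) = 0 from rfl,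
    show (4 + 2 : ZMod 5) = 1 from rfl]
  ring
end
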